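/- arXiv:2104.09980 — 2 statements merged into one kernel-verified Lean document; each statement's English description precedes it below -/
import Mathlib

section
/- With R_L(t) = Σ_{ℓ=0}^{L} Q_ℓ(t) and L ≥ 1, ∫_{−1}^{1} R_L(t)² t² (1−t²)^{d/2−1} dt = (|S^d|/|S^{d−1}|) [ d(L+1)/(L(d+2L+1)) + (d+4L−2)/(d+2L−1) ] C(d+L−1,d). -/
open intervalIntegral Real Finset

/-- Gegenbauer (ultraspherical) polynomials `C_ℓ^{(λ)}`, via the standard recurrence. -/
noncomputable def gegenbauer (lam : ℝ) : ℕ → ℝ → ℝ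
  | 0 => fun _ => 1
  | 1 => fun t => 2 * lam * t
  | (n + 2) => fun t =>
      (2 * ((n : ℝ) + 1 + lam) * t * gegenbauer lam (n + 1) t
        - ((n : ℝ) + 2 * lam) * gegenbauer lam n t) / ((n : ℝ) + 2)

/-- Normalized Gegenbauer polynomial `Q_ℓ(t) = ((d+2ℓ−1)/(d−1)) C_ℓ^{((d−1)/2)}(t)`. -/
noncomputable def Q (d : ℕ) (ℓ : ℕ) (t : ℝ) : ℝ :=
  ((d : ℝ) + 2 * ℓ - 1) / ((d : ℝ) - 1) * gegenbauer (((d : ℝ) - 1) / 2) ℓ t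

/-- Coefficient `a_k = k/(d+2k−1)`. -/
noncomputable def aCoeff (d : ℕ) (k : ℤ) : ℝ := (k : ℝ) / ((d : ℝ) + 2 * k - 1)

/-- Coefficient `b_k = 1 − a_k` for `k ≥ 0`, with the convention `b_{−1} = 0`
(note `b_0 = 1 − a_0 = 1`). -/
noncomputable def bCoeff (d : ℕ) (k : ℤ) : ℝ := if k < 0 then 0 else 1 - aCoeff d k

/-- `Z(d,ℓ) = C(d+ℓ,d) − C(d+ℓ−2,d)`, the dimension of the degree-`ℓ` spherical harmonics. -/
noncomputable def Zdim (d ℓ : ℕ) : ℝ := (Nat.choose (d + ℓ) d : ℝ) - (Nat.choose (d + ℓ - 2) d : ℝ)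

/-- `Z(d,ℓ)` for integer `ℓ`, zero for negative `ℓ`. -/
noncomputable def ZdimZ (d : ℕ) (k : ℤ) : ℝ := if k < 0 then 0 else Zdim d k.toNat

/-- Surface area `|S^d| = 2π^{(d+1)/2}/Γ((d+1)/2)`. -/
noncomputable def surfaceArea (d : ℕ) : ℝ :=
  2 * Real.pi ^ (((d : ℝ) + 1) / 2) / Real.Gamma (((d : ℝ) + 1) / 2)

/-- `R_L(t) = Σ_{ℓ=0}^{L} Q_ℓ(t)`, the reproducing kernel of `𝒫_L(S^d)`. -/
noncomputable def R (d L : ℕ) (t : ℝ) : ℝ := ∑ ℓ ∈ Finset.range (L + 1), Q d ℓ t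

/-!
Since `a_k + b_k = 1`, the three-term recurrence `t Q_k = a_{k+1} Q_{k+1} + b_{k-1} Q_{k-1}`
telescopes when summed over `k ≤ L`, and `t R_L = ∑_{k<L} Q_k + a_L Q_L + a_{L+1} Q_{L+1}`.
The `Q_k` are orthogonal, being eigenfunctions of a Sturm–Liouville operator with distinct
eigenvalues. Taking the inner products of `t Q_k` with `Q_{k+1}` and of `t Q_{k+1}` with `Q_k` gives
`a_{k+1} ‖Q_{k+1}‖² = b_k ‖Q_k‖²`, whence `‖Q_k‖² = (|S^d| / |S^{d-1}|) Z(d,k)`. By Pythagoras the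
integral is `(|S^d| / |S^{d-1}|) (∑_{k<L} Z(d,k) + a_L² Z(d,L) + a_{L+1}² Z(d,L+1))`, where the sum
of the `Z(d,k)` telescopes as well.
-/

section Weight

lemma integral_one_sub_sq_rpow_sub_one {s : ℝ} (hs : 0 < s) :
    ∫ t in (-1 : ℝ)..1, (1 - t ^ 2) ^ (s - 1) =
      2 ^ (2 * s - 1) * (Gamma s * Gamma s / Gamma (2 * s)) := by
  rw [two_mul]
  apply Complex.ofReal_injective
  calc ((∫ t in (-1 : ℝ)..1, (1 - t ^ 2) ^ (s - 1) : ℝ) : ℂ)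
    _ = ∫ t in (-1 : ℝ)..1,
          ((t + 1 : ℝ) : ℂ) ^ (s - 1 : ℂ) * ((2 : ℝ) - (t + 1 : ℝ) : ℂ) ^ (s - 1 : ℂ) := by
      rw [← intervalIntegral.integral_ofReal]
      refine integral_congr fun t ht => ?_
      rw [Set.uIcc_of_le (by norm_num)] at ht
      simp only [← Complex.ofReal_sub, ← Complex.ofReal_one]
      rw [← Complex.ofReal_cpow (by linarith [ht.1]), ← Complex.ofReal_cpow (by linarith [ht.2]),
        ← Complex.ofReal_mul, ← mul_rpow (by linarith [ht.1]) (by linarith [ht.2])]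
      ring_nf
    _ = ∫ x in (0 : ℝ)..2, (x : ℂ) ^ (s - 1 : ℂ) * ((2 : ℝ) - x : ℂ) ^ (s - 1 : ℂ) := by
      rw [intervalIntegral.integral_comp_add_right
        (fun x : ℝ => (x : ℂ) ^ (s - 1 : ℂ) * ((2 : ℝ) - x : ℂ) ^ (s - 1 : ℂ))]
      norm_num
    _ = ((2 ^ (s + s - 1) * (Gamma s * Gamma s / Gamma (s + s)) : ℝ) : ℂ) := by
      rw [Complex.betaIntegral_scaled _ _ two_pos,
        Complex.betaIntegral_eq_Gamma_mul_div _ _ (by simpa) (by simpa)]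
      push_cast [← Complex.Gamma_ofReal, Complex.ofReal_cpow two_pos.le]
      rfl

lemma integral_one_sub_sq_rpow {α : ℝ} (hα : -1 < α) :
    ∫ t in (-1 : ℝ)..1, (1 - t ^ 2) ^ α = √π * Gamma (α + 1) / Gamma (α + 3 / 2) := by
  obtain ⟨s, rfl⟩ : ∃ s, α = s - 1 := ⟨α + 1, by ring⟩
  have hs : 0 < s := by linarith
  have hΓ : Gamma (s + 1 / 2) ≠ 0 := (Gamma_pos_of_pos (by positivity)).ne'
  have hΓ' : Gamma (2 * s) ≠ 0 := (Gamma_pos_of_pos (by positivity)).ne'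
  have hduplication := Gamma_mul_Gamma_add_half s
  have hpow : (2 : ℝ) ^ (2 * s - 1) * 2 ^ (1 - 2 * s) = 1 := by
    rw [← rpow_add two_pos, sub_add_sub_cancel', sub_self, rpow_zero]
  rw [integral_one_sub_sq_rpow_sub_one hs, sub_add_cancel,
    show s - 1 + 3 / 2 = s + 1 / 2 by ring, mul_div_assoc', div_eq_div_iff hΓ' hΓ]
  linear_combination 2 ^ (2 * s - 1) * Gamma s * hduplication + Gamma s * Gamma (2 * s) * √π * hpow

lemma intervalIntegrable_mul_one_sub_sq_rpow {α : ℝ} (hα : -1 < α) {f : ℝ → ℝ}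
    (hf : Continuous f) :
    IntervalIntegrable (fun t => f t * (1 - t ^ 2) ^ α) MeasureTheory.volume (-1) 1 := by
  -- A divergent integral would have the junk value `0`, but this one is positive.
  have hweight : IntervalIntegrable (fun t : ℝ => (1 - t ^ 2) ^ α) MeasureTheory.volume (-1) 1 := by
    apply intervalIntegrable_of_integral_ne_zero
    rw [integral_one_sub_sq_rpow hα]
    have := Gamma_pos_of_pos (show 0 < α + 1 by linarith)
    have := Gamma_pos_of_pos (show 0 < α + 3 / 2 by linarith)
    positivity
  exact hweight.continuousOn_mul hf.continuousOn

lemma integral_one_sub_sq_rpow_eq_surfaceArea_div {d : ℕ} (hd : 0 < d) :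
    ∫ t in (-1 : ℝ)..1, (1 - t ^ 2) ^ ((d : ℝ) / 2 - 1) =
      surfaceArea d / surfaceArea (d - 1) := by
  have hd' : (0 : ℝ) < d := by exact_mod_cast hd
  rw [integral_one_sub_sq_rpow (by linarith [half_pos hd'])]
  simp only [surfaceArea, Nat.cast_pred hd, sub_add_cancel]
  rw [show (d : ℝ) / 2 - 1 + 3 / 2 = (d + 1) / 2 by ring,
    show ((d : ℝ) + 1) / 2 = d / 2 + 1 / 2 by ring, rpow_add pi_pos, ← sqrt_eq_rpow]
  have := Gamma_pos_of_pos (half_pos hd')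
  have := Gamma_pos_of_pos (show 0 < (d : ℝ) / 2 + 1 / 2 by positivity)
  field_simp

end Weight

lemma integral_sq_sum_mul_of_orthogonal {ι : Type*} (s : Finset ι) (c : ι → ℝ) {f : ι → ℝ → ℝ}
    {w : ℝ → ℝ} {μ : MeasureTheory.Measure ℝ} {a b : ℝ}
    (hint : ∀ i ∈ s, ∀ j ∈ s, IntervalIntegrable (fun t => f i t * f j t * w t) μ a b)
    (horth : ∀ i ∈ s, ∀ j ∈ s, i ≠ j → ∫ t in a..b, f i t * f j t * w t ∂μ = 0) :
    ∫ t in a..b, (∑ i ∈ s, c i * f i t) ^ 2 * w t ∂μ =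
      ∑ i ∈ s, c i ^ 2 * ∫ t in a..b, f i t ^ 2 * w t ∂μ := by
  have hexpand (t : ℝ) : (∑ i ∈ s, c i * f i t) ^ 2 * w t =
      ∑ p ∈ s ×ˢ s, c p.1 * c p.2 * (f p.1 t * f p.2 t * w t) := by
    rw [sq, sum_mul_sum, ← sum_product', sum_mul]
    exact sum_congr rfl fun p _ => by ring
  have hint' (p) (hp : p ∈ s ×ˢ s) :
      IntervalIntegrable (fun t => c p.1 * c p.2 * (f p.1 t * f p.2 t * w t)) μ a b :=
    (hint p.1 (mem_product.mp hp).1 p.2 (mem_product.mp hp).2).const_mul _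
  simp only [hexpand]
  rw [integral_finsetSum hint', sum_product]
  simp only [integral_const_mul]
  refine sum_congr rfl fun i hi => ?_
  rw [sum_eq_single_of_mem i hi fun j hj hji => by rw [horth i hi j hj hji.symm, mul_zero]]
  simp only [← sq]

section GegenbauerPoly

open Polynomial

/-- The Gegenbauer polynomial `C_n^{(λ)}` as a formal polynomial; it gives access to the
derivatives of the function `gegenbauer lam n`. -/
noncomputable def gegenbauerPoly (lam : ℝ) : ℕ → ℝ[X]
  | 0 => 1
  | 1 => 2 * C lam * X
  | (n + 2) => C ((n : ℝ) + 2)⁻¹ *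
      (2 * ((n : ℝ[X]) + 1 + C lam) * X * gegenbauerPoly lam (n + 1)
        - ((n : ℝ[X]) + 2 * C lam) * gegenbauerPoly lam n)

variable (lam : ℝ)

lemma eval_gegenbauerPoly (t : ℝ) : ∀ n, (gegenbauerPoly lam n).eval t = gegenbauer lam n t
  | 0 => by simp only [gegenbauerPoly, gegenbauer, eval_one]
  | 1 => by simp only [gegenbauerPoly, gegenbauer, eval_mul, eval_ofNat, eval_C, eval_X]
  | (n + 2) => by
    simp only [gegenbauerPoly, gegenbauer, eval_mul, eval_sub, eval_add, eval_natCast, eval_ofNat,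
      eval_one, eval_C, eval_X, eval_gegenbauerPoly t (n + 1), eval_gegenbauerPoly t n]
    rw [inv_mul_eq_div]

lemma gegenbauerPoly_add_two (n : ℕ) : ((n : ℝ[X]) + 2) * gegenbauerPoly lam (n + 2) =
    2 * ((n : ℝ[X]) + 1 + C lam) * X * gegenbauerPoly lam (n + 1)
      - ((n : ℝ[X]) + 2 * C lam) * gegenbauerPoly lam n := by
  have hinv : ((n : ℝ[X]) + 2) * C ((n : ℝ) + 2)⁻¹ = 1 := by
    rw [show (n : ℝ[X]) + 2 = C ((n : ℝ) + 2) by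
      rw [C_add, C_eq_natCast, C_ofNat], ← C_mul,
      mul_inv_cancel₀ (by positivity), C_1]
  rw [gegenbauerPoly, ← mul_assoc, hinv, one_mul]

lemma derivative_gegenbauerPoly_recurrences (n : ℕ) :
    derivative (gegenbauerPoly lam (n + 1)) - X * derivative (gegenbauerPoly lam n) =
        ((n : ℝ[X]) + 2 * C lam) * gegenbauerPoly lam n ∧
      X * derivative (gegenbauerPoly lam (n + 1)) - derivative (gegenbauerPoly lam n) =
        ((n : ℝ[X]) + 1) * gegenbauerPoly lam (n + 1) := by
  induction n with
  | zero =>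
    simp only [zero_add, gegenbauerPoly, derivative_mul, derivative_one, derivative_C,
      derivative_ofNat, derivative_X, Nat.cast_zero]
    constructor <;> ring
  | succ n ih =>
    obtain ⟨ih₁, ih₂⟩ := ih
    have hrec := gegenbauerPoly_add_two lam n
    have hderiv := congrArg derivative hrec
    simp only [derivative_mul, derivative_sub, derivative_add, derivative_natCast,
      derivative_ofNat, derivative_one, derivative_C, derivative_X] at hderiv
    have hsucc : derivative (gegenbauerPoly lam (n + 2))
          - X * derivative (gegenbauerPoly lam (n + 1)) =
        (((n + 1 : ℕ) : ℝ[X]) + 2 * C lam) * gegenbauerPoly lam (n + 1) := by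
      have hn : (n : ℝ[X]) + 2 ≠ 0 := by exact_mod_cast Nat.succ_ne_zero (n + 1)
      apply mul_left_cancel₀ hn
      push_cast
      linear_combination hderiv + (n + 2 * C lam) * ih₂
    refine ⟨hsucc, ?_⟩
    push_cast at hsucc ⊢
    linear_combination X * hsucc + X * ih₂ - ih₁ - hrec

lemma derivative_gegenbauerPoly_succ (n : ℕ) :
    derivative (gegenbauerPoly lam (n + 1)) = X * derivative (gegenbauerPoly lam n) +
      ((n : ℝ[X]) + 2 * C lam) * gegenbauerPoly lam n :=
  eq_add_of_sub_eq' (derivative_gegenbauerPoly_recurrences lam n).1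

lemma one_sub_X_sq_mul_derivative_gegenbauerPoly (n : ℕ) :
    (1 - X ^ 2) * derivative (gegenbauerPoly lam n) =
      ((n : ℝ[X]) + 2 * C lam) * X * gegenbauerPoly lam n
        - ((n : ℝ[X]) + 1) * gegenbauerPoly lam (n + 1) := by
  obtain ⟨h₁, h₂⟩ := derivative_gegenbauerPoly_recurrences lam n
  linear_combination X * h₁ - h₂

lemma gegenbauerPoly_differential_equation (n : ℕ) :
    (1 - X ^ 2) * derivative (derivative (gegenbauerPoly lam n))
        - (2 * C lam + 1) * X * derivative (gegenbauerPoly lam n) =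
      -((n : ℝ[X]) * ((n : ℝ[X]) + 2 * C lam)) * gegenbauerPoly lam n := by
  have hderiv := congrArg derivative (one_sub_X_sq_mul_derivative_gegenbauerPoly lam n)
  simp only [derivative_mul, derivative_sub, derivative_add, derivative_natCast, derivative_ofNat,
    derivative_one, derivative_C, derivative_X, derivative_X_sq, C_ofNat] at hderiv
  linear_combination hderiv - ((n : ℝ[X]) + 1) * derivative_gegenbauerPoly_succ lam n

variable {lam}

lemma hasDerivAt_eval_mul_one_sub_sq_rpow (g : ℝ[X]) {t : ℝ} (ht : t ∈ Set.Ioo (-1) 1) :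
    HasDerivAt (fun s => g.eval s * (1 - s ^ 2) ^ (lam + 1 / 2))
      (((1 - X ^ 2) * derivative g - (2 * C lam + 1) * X * g).eval t *
        (1 - t ^ 2) ^ (lam - 1 / 2)) t := by
  have hpos : 0 < 1 - t ^ 2 := by nlinarith [ht.1, ht.2]
  have hbase : HasDerivAt (fun s : ℝ => 1 - s ^ 2) (-(2 * t)) t := by
    simpa using (hasDerivAt_pow 2 t).const_sub 1
  refine ((g.hasDerivAt t).mul (hbase.rpow_const (p := lam + 1 / 2) (.inl hpos.ne'))).congr_deriv ?_
  rw [show lam + 1 / 2 = lam - 1 / 2 + 1 by ring, rpow_add_one hpos.ne', add_sub_cancel_right]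
  simp only [eval_sub, eval_mul, eval_add, eval_pow, eval_one, eval_ofNat, eval_C, eval_X]
  ring

lemma integral_sturmLiouville_eq_zero (hlam : -1 / 2 < lam) (g : ℝ[X]) :
    ∫ t in (-1 : ℝ)..1, ((1 - X ^ 2) * derivative g - (2 * C lam + 1) * X * g).eval t *
      (1 - t ^ 2) ^ (lam - 1 / 2) = 0 := by
  have hexp : 0 < lam + 1 / 2 := by linarith
  have hcont : Continuous fun t : ℝ => g.eval t * (1 - t ^ 2) ^ (lam + 1 / 2) :=
    g.continuous.mul (Continuous.rpow_const (by fun_prop) fun _ => .inr hexp.le)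
  rw [integral_eq_sub_of_hasDerivAt_of_le (by norm_num) hcont.continuousOn
    (fun t ht => hasDerivAt_eval_mul_one_sub_sq_rpow g ht)
    (intervalIntegrable_mul_one_sub_sq_rpow (by linarith) (Polynomial.continuous _))]
  norm_num [zero_rpow hexp.ne']

lemma continuous_gegenbauer (n : ℕ) : Continuous (gegenbauer lam n) := by
  simpa only [eval_gegenbauerPoly] using (gegenbauerPoly lam n).continuous

theorem integral_gegenbauer_mul_gegenbauer (hlam : -1 / 2 < lam) {m n : ℕ} (hmn : m ≠ n) :
    ∫ t in (-1 : ℝ)..1, gegenbauer lam m t * gegenbauer lam n t * (1 - t ^ 2) ^ (lam - 1 / 2) =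
      0 := by
  set p := gegenbauerPoly lam m with hp
  set q := gegenbauerPoly lam n with hq
  -- The Wronskian of two solutions, with eigenvalues `k (k + 2λ)` for `k = m, n`.
  have hwronskian : (1 - X ^ 2) * derivative (derivative p * q - p * derivative q)
      - (2 * C lam + 1) * X * (derivative p * q - p * derivative q) =
      C (((n : ℝ) - m) * (n + m + 2 * lam)) * (p * q) := by
    simp only [derivative_sub, derivative_mul, C_mul, C_sub, C_add, C_ofNat, C_eq_natCast]
    linear_combination q * gegenbauerPoly_differential_equation lam m
      - p * gegenbauerPoly_differential_equation lam n
  have hzero := integral_sturmLiouville_eq_zero hlam (derivative p * q - p * derivative q)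
  rw [hwronskian] at hzero
  simp only [eval_mul, eval_C, hp, hq, eval_gegenbauerPoly, mul_assoc _ (_ * _),
    integral_const_mul] at hzero
  refine (mul_eq_zero.mp hzero).resolve_left (mul_ne_zero ?_ ?_)
  · exact sub_ne_zero.mpr (by exact_mod_cast hmn.symm)
  · have : (1 : ℝ) ≤ n + m := by exact_mod_cast (by omega : 1 ≤ n + m)
    linarith

end GegenbauerPoly

section Coefficients

lemma bCoeff_natCast (d n : ℕ) : bCoeff d n = 1 - aCoeff d n :=
  if_neg (Int.natCast_nonneg n).not_gt

variable {d : ℕ}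

lemma add_two_mul_sub_one_pos (hd : 2 ≤ d) (n : ℕ) : 0 < (d : ℝ) + 2 * n - 1 := by
  have : (2 : ℝ) ≤ d := by exact_mod_cast hd
  have := n.cast_nonneg (α := ℝ)
  linarith

lemma bCoeff_natCast_eq_div (hd : 2 ≤ d) (n : ℕ) :
    bCoeff d n = ((d : ℝ) + n - 1) / ((d : ℝ) + 2 * n - 1) := by
  have := (add_two_mul_sub_one_pos hd n).ne'
  rw [bCoeff_natCast, aCoeff, Int.cast_natCast, one_sub_div this]
  congr 1
  ring

lemma aCoeff_natCast_add_one (n : ℕ) : aCoeff d (n + 1) = (n + 1) / (d + 2 * n + 1) := by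
  rw [aCoeff]
  push_cast
  congr 1
  ring

end Coefficients

section Dimension

variable {d : ℕ}

lemma Zdim_zero (hd : 0 < d) : Zdim d 0 = 1 := by
  rw [Zdim, Nat.choose_eq_zero_of_lt (by omega : d + 0 - 2 < d)]
  simp

lemma Zdim_eq (hd : 2 ≤ d) (n : ℕ) :
    Zdim d n = ((d : ℝ) + 2 * n - 1) / (d + n - 1) * (d + n - 1).choose (d - 1) := by
  obtain ⟨e, rfl⟩ := Nat.exists_eq_add_of_le' hd
  have hpascal : (e + n + 2).choose (e + 2) =
      (e + n + 1).choose (e + 1) + ((e + n).choose (e + 1) + (e + n).choose (e + 2)) := by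
    rw [Nat.choose_succ_succ', Nat.choose_succ_succ' (e + n) (e + 1)]
  have habsorb := Nat.choose_mul_succ_eq (e + n) (e + 1)
  rw [show e + n + 1 - (e + 1) = n by omega] at habsorb
  rw [Zdim, show e + 2 + n = e + n + 2 by ring, Nat.add_sub_cancel, hpascal,
    show e + n + 2 - 1 = e + n + 1 by omega, show e + 2 - 1 = e + 1 by omega]
  have hden : ((e + 2 : ℕ) : ℝ) + n - 1 ≠ 0 := by push_cast; ring_nf; positivity
  rify at habsorb
  push_cast at hden ⊢
  field_simp
  linear_combination habsorb

lemma aCoeff_mul_Zdim_succ (hd : 2 ≤ d) (n : ℕ) :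
    aCoeff d (n + 1) * Zdim d (n + 1) = bCoeff d n * Zdim d n := by
  have habsorb := Nat.choose_mul_succ_eq (d + n - 1) (d - 1)
  rw [show d + n - 1 + 1 = d + n by omega, show d + n - (d - 1) = n + 1 by omega] at habsorb
  have h₀ := (add_two_mul_sub_one_pos hd n).ne'
  have h₁ := (add_two_mul_sub_one_pos hd (n + 1)).ne'
  have h₂ : (d : ℝ) + n ≠ 0 := by positivity
  have h₃ : (d : ℝ) + n - 1 ≠ 0 := by
    have : (2 : ℝ) ≤ d := by exact_mod_cast hd
    linarith [n.cast_nonneg (α := ℝ)]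
  rw [Zdim_eq hd, Zdim_eq hd, bCoeff_natCast_eq_div hd, aCoeff,
    show d + (n + 1) - 1 = d + n by omega]
  rify at habsorb
  push_cast at h₁ ⊢
  rw [show (d : ℝ) + (n + 1) - 1 = d + n by ring]
  generalize (d : ℝ) + 2 * (n + 1) - 1 = x at h₁ ⊢
  generalize (d : ℝ) + 2 * n - 1 = y at h₀ ⊢
  field_simp
  linear_combination -habsorb

lemma sum_Zdim (hd : 0 < d) {L : ℕ} (hL : 1 ≤ L) :
    ∑ n ∈ range L, Zdim d n = (d + L - 1).choose d + (d + L - 2).choose d := by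
  induction L, hL using Nat.le_induction with
  | base =>
    rw [sum_range_one, Zdim_zero hd, Nat.add_sub_cancel, Nat.choose_self,
      Nat.choose_eq_zero_of_lt (by omega : d + 1 - 2 < d)]
    simp
  | succ L hL ih =>
    rw [sum_range_succ, ih, Zdim, show d + (L + 1) - 1 = d + L by omega,
      show d + (L + 1) - 2 = d + L - 1 by omega]
    ring

lemma mul_Zdim (hd : 2 ≤ d) (n : ℕ) :
    n * ((d : ℝ) + n - 1) * Zdim d n = d * ((d : ℝ) + 2 * n - 1) * (d + n - 1).choose d := by
  have hchoose := Nat.choose_succ_right_eq (d + n - 1) (d - 1)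
  rw [Nat.sub_add_cancel (by omega), show d + n - 1 - (d - 1) = n by omega] at hchoose
  have : (d : ℝ) + n - 1 ≠ 0 := by
    have : (2 : ℝ) ≤ d := by exact_mod_cast hd
    linarith [n.cast_nonneg (α := ℝ)]
  rw [Zdim_eq hd]
  rify at hchoose
  field_simp
  linear_combination -((d : ℝ) + 2 * n - 1) * hchoose

lemma choose_add_sub_two_mul (hd : 0 < d) {L : ℕ} (hL : 1 ≤ L) :
    ((d + L - 2).choose d : ℝ) * (d + L - 1) = (d + L - 1).choose d * (L - 1) := by
  obtain ⟨k, rfl⟩ := Nat.exists_eq_add_of_le' hL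
  have habsorb := Nat.choose_mul_succ_eq (d + k - 1) d
  rw [Nat.sub_add_cancel (by omega), Nat.add_sub_cancel_left] at habsorb
  rw [show d + (k + 1) - 2 = d + k - 1 by omega, ← add_assoc, Nat.add_sub_cancel]
  rify at habsorb
  push_cast
  linear_combination habsorb

lemma sum_Zdim_add_aCoeff_sq_mul_Zdim (hd : 2 ≤ d) {L : ℕ} (hL : 1 ≤ L) :
    (∑ n ∈ range L, Zdim d n) + aCoeff d L ^ 2 * Zdim d L +
        aCoeff d (L + 1) ^ 2 * Zdim d (L + 1) =
      ((d : ℝ) * (L + 1) / (L * (d + 2 * L + 1)) +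
          ((d : ℝ) + 4 * L - 2) / ((d : ℝ) + 2 * L - 1)) *
        (d + L - 1).choose d := by
  have hd' : (2 : ℝ) ≤ d := by exact_mod_cast hd
  have hL' : (1 : ℝ) ≤ L := by exact_mod_cast hL
  have h₀ := (add_two_mul_sub_one_pos hd L).ne'
  have h₁ : (d : ℝ) + L - 1 ≠ 0 := by linarith
  have h₂ : (L : ℝ) ≠ 0 := by positivity
  have hchoose : ((d + L - 2).choose d : ℝ) = (L - 1) / (d + L - 1) * (d + L - 1).choose d := by
    field_simp
    linear_combination choose_add_sub_two_mul (d := d) (by omega) hL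
  have hZ : Zdim d L = d * ((d : ℝ) + 2 * L - 1) / (L * (d + L - 1)) *
      (d + L - 1).choose d := by
    field_simp
    linear_combination mul_Zdim hd L
  have hZsucc : aCoeff d (L + 1) ^ 2 * Zdim d (L + 1) =
      aCoeff d (L + 1) * bCoeff d L * Zdim d L := by
    rw [sq, mul_assoc, aCoeff_mul_Zdim_succ hd, mul_assoc]
  rw [sum_Zdim (by omega) hL, hZsucc, hchoose, hZ, aCoeff_natCast_add_one,
    bCoeff_natCast_eq_div hd, aCoeff, Int.cast_natCast]
  generalize hy : (d : ℝ) + 2 * L - 1 = y at h₀ ⊢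
  field_simp
  rw [← hy]
  ring

end Dimension

section ZonalFunctions

variable {d : ℕ}

lemma continuous_Q (n : ℕ) : Continuous (Q d n) :=
  continuous_const.mul (continuous_gegenbauer n)

lemma Q_zero (hd : 2 ≤ d) (t : ℝ) : Q d 0 t = 1 := by
  have := (add_two_mul_sub_one_pos hd 0).ne'
  simp only [Q, gegenbauer, Nat.cast_zero, mul_zero, add_zero, mul_one] at this ⊢
  exact div_self this

-- At `n = 0` the truncated `Q d (0 - 1)` is harmless, since `bCoeff d (-1) = 0`.
lemma mul_Q (hd : 2 ≤ d) (n : ℕ) (t : ℝ) :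
    t * Q d n t =
      aCoeff d (n + 1) * Q d (n + 1) t + bCoeff d (n - 1) * Q d (n - 1) t := by
  have hd₀ : (d : ℝ) - 1 ≠ 0 := by simpa using (add_two_mul_sub_one_pos hd 0).ne'
  cases n with
  | zero =>
    have hb : bCoeff d ((0 : ℕ) - 1) = 0 := if_pos (by decide)
    rw [hb, aCoeff_natCast_add_one]
    simp only [Q, gegenbauer]
    push_cast
    field_simp
    ring
  | succ n =>
    have h₀ := (add_two_mul_sub_one_pos hd n).ne'
    have h₂ := (add_two_mul_sub_one_pos hd (n + 2)).ne'
    have hn : (n : ℝ) + 2 ≠ 0 := by positivity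
    simp only [Nat.cast_add, Nat.cast_one, add_sub_cancel_right, Nat.add_sub_cancel,
      bCoeff_natCast_eq_div hd, Q, gegenbauer, aCoeff]
    push_cast at h₂ ⊢
    rw [show (n : ℝ) + 1 + 1 = n + 2 by ring]
    field_simp
    ring

lemma intervalIntegrable_Q_mul_Q (hd : 0 < d) (m n : ℕ) :
    IntervalIntegrable (fun t => Q d m t * Q d n t * (1 - t ^ 2) ^ ((d : ℝ) / 2 - 1))
      MeasureTheory.volume (-1) 1 := by
  have hd' : (0 : ℝ) < d := by exact_mod_cast hd
  exact intervalIntegrable_mul_one_sub_sq_rpow (by linarith)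
    ((continuous_Q m).mul (continuous_Q n))

theorem integral_Q_mul_Q (hd : 0 < d) {m n : ℕ} (hmn : m ≠ n) :
    ∫ t in (-1 : ℝ)..1, Q d m t * Q d n t * (1 - t ^ 2) ^ ((d : ℝ) / 2 - 1) = 0 := by
  have hd' : (0 : ℝ) < d := by exact_mod_cast hd
  have horth := integral_gegenbauer_mul_gegenbauer
    (show -1 / 2 < ((d : ℝ) - 1) / 2 by linarith) hmn
  rw [show ((d : ℝ) - 1) / 2 - 1 / 2 = d / 2 - 1 by ring] at horth
  simp only [Q, mul_mul_mul_comm _ (gegenbauer _ m _), mul_assoc (_ * _) (_ * _),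
    integral_const_mul, horth, mul_zero]

lemma integral_mul_Q_mul_Q (hd : 2 ≤ d) (m n : ℕ) :
    ∫ t in (-1 : ℝ)..1, t * Q d n t * Q d m t * (1 - t ^ 2) ^ ((d : ℝ) / 2 - 1) =
      aCoeff d (n + 1) *
          (∫ t in (-1 : ℝ)..1, Q d (n + 1) t * Q d m t * (1 - t ^ 2) ^ ((d : ℝ) / 2 - 1)) +
        bCoeff d (n - 1) *
          ∫ t in (-1 : ℝ)..1, Q d (n - 1) t * Q d m t * (1 - t ^ 2) ^ ((d : ℝ) / 2 - 1) := by
  have hint (k : ℕ) := intervalIntegrable_Q_mul_Q (by omega : 0 < d) k m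
  rw [← integral_const_mul, ← integral_const_mul,
    ← integral_add ((hint _).const_mul _) ((hint _).const_mul _)]
  refine integral_congr fun t _ => ?_
  simp only [mul_Q hd]
  ring

lemma aCoeff_mul_integral_Q_succ_sq (hd : 2 ≤ d) (n : ℕ) :
    aCoeff d (n + 1) * (∫ t in (-1 : ℝ)..1, Q d (n + 1) t ^ 2 * (1 - t ^ 2) ^ ((d : ℝ) / 2 - 1)) =
      bCoeff d n * ∫ t in (-1 : ℝ)..1, Q d n t ^ 2 * (1 - t ^ 2) ^ ((d : ℝ) / 2 - 1) := by
  have hup := integral_mul_Q_mul_Q hd (n + 1) n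
  have hdown := integral_mul_Q_mul_Q hd n (n + 1)
  rw [integral_Q_mul_Q (by omega) (by omega : n - 1 ≠ n + 1), mul_zero, add_zero] at hup
  rw [integral_Q_mul_Q (by omega) (by omega : n + 1 + 1 ≠ n), mul_zero, zero_add] at hdown
  simp only [sq, Nat.cast_add, Nat.cast_one, add_sub_cancel_right, Nat.add_sub_cancel]
    at hup hdown ⊢
  rw [← hup, ← hdown]
  simp only [mul_right_comm]

theorem integral_Q_sq (hd : 2 ≤ d) (n : ℕ) :
    ∫ t in (-1 : ℝ)..1, Q d n t ^ 2 * (1 - t ^ 2) ^ ((d : ℝ) / 2 - 1) =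
      surfaceArea d / surfaceArea (d - 1) * Zdim d n := by
  induction n with
  | zero =>
    simp only [Q_zero hd, one_pow, one_mul,
      integral_one_sub_sq_rpow_eq_surfaceArea_div (by omega : 0 < d), Zdim_zero (by omega : 0 < d),
      mul_one]
  | succ n ih =>
    have ha : aCoeff d (n + 1) ≠ 0 := by
      rw [aCoeff_natCast_add_one]
      positivity
    apply mul_left_cancel₀ ha
    rw [aCoeff_mul_integral_Q_succ_sq hd, ih, mul_left_comm, ← aCoeff_mul_Zdim_succ hd,
      mul_left_comm]

lemma mul_R (hd : 2 ≤ d) (L : ℕ) (t : ℝ) :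
    t * R d L t = (∑ k ∈ range L, Q d k t) + aCoeff d L * Q d L t +
      aCoeff d (L + 1) * Q d (L + 1) t := by
  rw [R, mul_sum]
  induction L with
  | zero => simp [mul_Q hd, aCoeff, bCoeff]
  | succ L ih =>
    rw [sum_range_succ, ih, mul_Q hd, sum_range_succ]
    push_cast
    rw [add_sub_cancel_right, bCoeff_natCast]
    ring

theorem integral_mul_R_sq (hd : 2 ≤ d) (L : ℕ) :
    ∫ t in (-1 : ℝ)..1, (t * R d L t) ^ 2 * (1 - t ^ 2) ^ ((d : ℝ) / 2 - 1) =
      surfaceArea d / surfaceArea (d - 1) *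
        ((∑ n ∈ range L, Zdim d n) + aCoeff d L ^ 2 * Zdim d L +
          aCoeff d (L + 1) ^ 2 * Zdim d (L + 1)) := by
  let c (k : ℕ) : ℝ := if k < L then 1 else aCoeff d k
  have hc (g : ℝ → ℝ) (f : ℕ → ℝ) (hg : g 1 = 1) : ∑ k ∈ range (L + 2), g (c k) * f k =
      (∑ k ∈ range L, f k) + g (aCoeff d L) * f L + g (aCoeff d (L + 1)) * f (L + 1) := by
    rw [sum_range_succ, sum_range_succ]
    congr 2
    · exact sum_congr rfl fun k hk => by simp [c, mem_range.mp hk, hg]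
    · simp [c]
    · simp [c]
  have hexpand (t : ℝ) : t * R d L t = ∑ k ∈ range (L + 2), c k * Q d k t :=
    (mul_R hd L t).trans (hc id (Q d · t) rfl).symm
  simp only [hexpand]
  rw [integral_sq_sum_mul_of_orthogonal _ _
    (fun i _ j _ => intervalIntegrable_Q_mul_Q (by omega) i j)
    (fun i _ j _ hij => integral_Q_mul_Q (by omega) hij)]
  simp only [integral_Q_sq hd]
  rw [hc (· ^ 2) _ (one_pow 2), ← mul_sum]
  ring

end ZonalFunctions

theorem integral_R_sq_t_sq (d : ℕ) (hd : 2 ≤ d) (L : ℕ) (hL : 1 ≤ L) :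
    (∫ t in (-1 : ℝ)..1, R d L t ^ 2 * t ^ 2 * (1 - t ^ 2) ^ ((d : ℝ) / 2 - 1)) =
      (surfaceArea d / surfaceArea (d - 1)) *
        ((d : ℝ) * (L + 1) / (L * (d + 2 * L + 1)) +
          ((d : ℝ) + 4 * L - 2) / ((d : ℝ) + 2 * L - 1)) *
        (Nat.choose (d + L - 1) d : ℝ) := by
  have hsq (t : ℝ) : R d L t ^ 2 * t ^ 2 = (t * R d L t) ^ 2 := by rw [mul_pow, mul_comm]
  simp only [hsq]
  rw [integral_mul_R_sq hd, sum_Zdim_add_aCoeff_sq_mul_Zdim hd hL, mul_assoc]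
end

section
/- The continuous s-energy of the normalized surface measure on S^d satisfies, for s < d: ∫∫ ‖x−y‖^{−s} dσ_d(x) dσ_d(y) = 2^{d−s−1} Γ((d+1)/2) Γ((d−s)/2) / (√π Γ(d − s/2)). -/
open MeasureTheory Metric Real

/-- The normalized (probability) surface measure on the unit sphere `S^d ⊂ ℝ^{d+1}`. -/
noncomputable def uniformSphere (d : ℕ) :
    Measure (sphere (0 : EuclideanSpace ℝ (Fin (d + 1))) 1) :=
  ((volume : Measure (EuclideanSpace ℝ (Fin (d + 1)))).toSphere Set.univ)⁻¹ •
    (volume : Measure (EuclideanSpace ℝ (Fin (d + 1)))).toSphere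

/-! For a fixed unit vector `x` and a uniform point `y` of `S^d`, the haversine
`‖x - y‖ ^ 2 / 4 = (1 - ⟪x, y⟫) / 2` has the `Beta (d / 2, d / 2)` distribution. To see this,
integrate a function of the haversine of `v / ‖v‖` against a radial weight over `ℝ^{d+1}`, once in
polar coordinates and once along the lines parallel to `x`, each line being parametrised by the
haversine. The energy is therefore `2 ^ (-s)` times the moment of order `-s / 2` of that
distribution, a quotient of beta functions, which Legendre's duplication formula simplifies. -/

open Set Module ProbabilityTheory
open scoped ENNReal RealInnerProductSpace

section PolarCoordinates

variable {E : Type*} [NormedAddCommGroup E] [NormedSpace ℝ E] [FiniteDimensional ℝ E]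
  [Nontrivial E] [MeasurableSpace E] [BorelSpace E] (μ : Measure E) [μ.IsAddHaarMeasure]

theorem lintegral_norm_mul_direction {h : ℝ → ℝ≥0∞} {g : E → ℝ≥0∞} (hh : Measurable h)
    (hg : Measurable g) :
    ∫⁻ v, h ‖v‖ * g (‖v‖⁻¹ • v) ∂μ =
      (∫⁻ y : sphere (0 : E) 1, g y ∂μ.toSphere) *
        ∫⁻ r in Ioi (0 : ℝ), ENNReal.ofReal (r ^ (finrank ℝ E - 1)) * h r := by
  calc ∫⁻ v, h ‖v‖ * g (‖v‖⁻¹ • v) ∂μ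
    _ = ∫⁻ v : ({0}ᶜ : Set E), h ‖(v : E)‖ * g (‖(v : E)‖⁻¹ • (v : E)) ∂μ.comap (↑) := by
      rw [lintegral_subtype_comap (measurableSet_singleton _).compl
        (fun v : E => h ‖v‖ * g (‖v‖⁻¹ • v)), restrict_compl_singleton]
    _ = ∫⁻ z : sphere (0 : E) 1 × Ioi (0 : ℝ), g z.1 * h z.2
          ∂μ.toSphere.prod (.volumeIoiPow (finrank ℝ E - 1)) := by
      rw [← μ.measurePreserving_homeomorphUnitSphereProd.lintegral_comp_emb
        (homeomorphUnitSphereProd E).measurableEmbedding]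
      simp only [homeomorphUnitSphereProd_apply_fst_coe, homeomorphUnitSphereProd_apply_snd_coe,
        mul_comm]
    _ = (∫⁻ y : sphere (0 : E) 1, g y ∂μ.toSphere) *
          ∫⁻ r : Ioi (0 : ℝ), h r ∂.volumeIoiPow (finrank ℝ E - 1) :=
      lintegral_prod_mul (f := fun y : sphere (0 : E) 1 => g y) (g := fun r : Ioi (0 : ℝ) => h r)
        (by fun_prop) (by fun_prop)
    _ = _ := by
      rw [Measure.volumeIoiPow, lintegral_withDensity_eq_lintegral_mul _ (by fun_prop)
        (by fun_prop)]
      exact congrArg _ (lintegral_subtype_comap measurableSet_Ioi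
        fun r : ℝ => ENNReal.ofReal (r ^ (finrank ℝ E - 1)) * h r)

end PolarCoordinates

section Slicing

theorem measurePreserving_toLp_cons (d : ℕ) :
    MeasurePreserving
      (fun p : ℝ × EuclideanSpace ℝ (Fin d) => WithLp.toLp 2 (Fin.cons p.1 p.2 : Fin (d + 1) → ℝ))
      volume volume := by
  convert! (PiLp.volume_preserving_toLp (Fin (d + 1))).comp <|
    ((volume_preserving_piFinSuccAbove (fun _ : Fin (d + 1) => ℝ) 0).symm _).comp <|
      (MeasurePreserving.id volume).prod (PiLp.volume_preserving_ofLp (Fin d)) using 1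
  ext p i
  refine Fin.cases ?_ (fun j => ?_) i <;> simp [MeasurableEquiv.piFinSuccAbove]

theorem norm_toLp_cons {d : ℕ} (t : ℝ) (u : EuclideanSpace ℝ (Fin d)) :
    ‖WithLp.toLp 2 (Fin.cons t u : Fin (d + 1) → ℝ)‖ = √(t ^ 2 + ‖u‖ ^ 2) := by
  simp [EuclideanSpace.norm_eq, Fin.sum_univ_succ, sq_sqrt, Finset.sum_nonneg, sq_nonneg]

variable {E : Type*} [NormedAddCommGroup E] [InnerProductSpace ℝ E] [FiniteDimensional ℝ E]
  {d : ℕ}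

theorem exists_orthonormalBasis_apply_zero_eq (hE : finrank ℝ E = d + 1) {e : E} (he : ‖e‖ = 1) :
    ∃ b : OrthonormalBasis (Fin (d + 1)) ℝ E, b 0 = e := by
  obtain ⟨b, hb⟩ := Orthonormal.exists_orthonormalBasis_extension_of_card_eq
    (𝕜 := ℝ) (E := E) (ι := Fin (d + 1)) (by simpa using hE) (v := fun _ => e) (s := {0}) (by
      simp [Set.domRestrict, he])
  exact ⟨b, hb 0 rfl⟩

variable [MeasurableSpace E] [BorelSpace E]

theorem lintegral_inner_norm (hE : finrank ℝ E = d + 1) {e : E} (he : ‖e‖ = 1)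
    {F : ℝ → ℝ → ℝ≥0∞} (hF : Measurable (Function.uncurry F)) :
    ∫⁻ v : E, F ⟪e, v⟫ ‖v‖ =
      ∫⁻ u : EuclideanSpace ℝ (Fin d), ∫⁻ t : ℝ, F t √(t ^ 2 + ‖u‖ ^ 2) := by
  obtain ⟨b, rfl⟩ := exists_orthonormalBasis_apply_zero_eq hE he
  have hF' : Measurable fun x : EuclideanSpace ℝ (Fin (d + 1)) => F (x 0) ‖x‖ :=
    hF.comp (by fun_prop : Measurable fun x : EuclideanSpace ℝ (Fin (d + 1)) => (x 0, ‖x‖))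
  calc ∫⁻ v : E, F ⟪b 0, v⟫ ‖v‖
    _ = ∫⁻ x : EuclideanSpace ℝ (Fin (d + 1)), F (x 0) ‖x‖ := by
      rw [← b.measurePreserving_repr.lintegral_comp hF']
      simp only [b.repr_apply_apply, LinearIsometryEquiv.norm_map]
    _ = ∫⁻ p : ℝ × EuclideanSpace ℝ (Fin d), F p.1 √(p.1 ^ 2 + ‖p.2‖ ^ 2) := by
      rw [← (measurePreserving_toLp_cons d).lintegral_comp hF']
      simp only [norm_toLp_cons, Fin.cons_zero]
    _ = _ := by
      rw [Measure.volume_eq_prod]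
      have hpair : Measurable fun p : ℝ × EuclideanSpace ℝ (Fin d) =>
          (p.1, √(p.1 ^ 2 + ‖p.2‖ ^ 2)) := by
        fun_prop
      exact lintegral_prod_symm _ (hF.comp hpair).aemeasurable

end Slicing

section Haversine

/-- The cotangent of the angle `θ ∈ (0, π)` whose haversine `(1 - cos θ) / 2` is `w ∈ (0, 1)`. -/
noncomputable def cotOfHaversine (w : ℝ) : ℝ :=
  (1 - 2 * w) / (2 * √(w * (1 - w)))

theorem sqrt_cotOfHaversine_sq_add_one {w : ℝ} (hw : w ∈ Ioo (0 : ℝ) 1) :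
    √(cotOfHaversine w ^ 2 + 1) = (2 * √(w * (1 - w)))⁻¹ := by
  have hκ : 0 < w * (1 - w) := mul_pos hw.1 (sub_pos.2 hw.2)
  rw [← sqrt_sq (x := (2 * √(w * (1 - w)))⁻¹) (by positivity), cotOfHaversine]
  congr 1
  field_simp
  rw [sq_sqrt hκ.le]
  ring

theorem haversine_cotOfHaversine {w : ℝ} (hw : w ∈ Ioo (0 : ℝ) 1) :
    (1 - cotOfHaversine w / √(cotOfHaversine w ^ 2 + 1)) / 2 = w := by
  have hκ : 0 < w * (1 - w) := mul_pos hw.1 (sub_pos.2 hw.2)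
  rw [sqrt_cotOfHaversine_sq_add_one hw, cotOfHaversine]
  field_simp
  ring

theorem hasDerivAt_cotOfHaversine {w : ℝ} (hw : w ∈ Ioo (0 : ℝ) 1) :
    HasDerivAt cotOfHaversine (-(4 * √(w * (1 - w)) ^ 3)⁻¹) w := by
  have hκ : 0 < w * (1 - w) := mul_pos hw.1 (sub_pos.2 hw.2)
  have hnum : HasDerivAt (fun w : ℝ => 1 - 2 * w) (-2) w := by
    simpa using ((hasDerivAt_id w).const_mul 2).const_sub 1
  have hden : HasDerivAt (fun w : ℝ => w * (1 - w)) (1 - 2 * w) w := by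
    convert! (hasDerivAt_id w).mul ((hasDerivAt_id w).const_sub 1) using 1
    rw [id, one_mul, mul_neg_one]
    ring
  convert! hnum.div ((hden.sqrt hκ.ne').const_mul 2) (by positivity) using 1
  have : √(w * (1 - w)) ^ 2 = w * (1 - w) := sq_sqrt hκ.le
  field_simp
  rw [this]
  ring

theorem image_cotOfHaversine : cotOfHaversine '' Ioo 0 1 = univ := by
  refine eq_univ_of_forall fun c => ?_
  set R := √(c ^ 2 + 1)
  have hR : R ^ 2 = c ^ 2 + 1 := sq_sqrt (by positivity)
  have hR0 : 0 < R := by positivity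
  have hw : (1 - c / R) / 2 * (1 - (1 - c / R) / 2) = (1 / (2 * R)) ^ 2 := by
    field_simp
    linarith
  obtain ⟨hlt, hgt⟩ := abs_lt_of_sq_lt_sq' (by linarith : c ^ 2 < R ^ 2) hR0.le
  refine ⟨(1 - c / R) / 2, ⟨?_, ?_⟩, ?_⟩
  · linarith [(div_lt_one hR0).2 hgt]
  · linarith [(lt_div_iff₀ hR0).2 (by linarith : -1 * R < c)]
  · rw [cotOfHaversine, hw, sqrt_sq (by positivity)]
    field_simp
    ring

theorem lintegral_haversine_line {ρ : ℝ} (hρ : 0 < ρ) (F : ℝ → ℝ → ℝ≥0∞) :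
    ∫⁻ t : ℝ, F ((1 - t / √(t ^ 2 + ρ ^ 2)) / 2) √(t ^ 2 + ρ ^ 2) =
      ∫⁻ w in Ioo (0 : ℝ) 1,
        ENNReal.ofReal (ρ / (4 * √(w * (1 - w)) ^ 3)) * F w (ρ / (2 * √(w * (1 - w)))) := by
  have himage : (fun w => ρ * cotOfHaversine w) '' Ioo 0 1 = univ := by
    rw [← Set.image_image (fun c => ρ * c), image_cotOfHaversine, image_univ]
    exact (mul_left_surjective₀ hρ.ne').range_eq
  have hinj : InjOn (fun w => ρ * cotOfHaversine w) (Ioo 0 1) :=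
    (mul_right_injective₀ hρ.ne').comp_injOn <|
      LeftInvOn.injOn (f₁' := fun c => (1 - c / √(c ^ 2 + 1)) / 2)
        fun w hw => haversine_cotOfHaversine hw
  have hnorm (c : ℝ) : √((ρ * c) ^ 2 + ρ ^ 2) = ρ * √(c ^ 2 + 1) := by
    rw [show (ρ * c) ^ 2 + ρ ^ 2 = ρ ^ 2 * (c ^ 2 + 1) by ring, sqrt_mul (sq_nonneg ρ),
      sqrt_sq hρ.le]
  rw [← setLIntegral_univ, ← himage, lintegral_image_eq_lintegral_abs_deriv_mul measurableSet_Ioo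
    (fun w hw => ((hasDerivAt_cotOfHaversine hw).const_mul ρ).hasDerivWithinAt) hinj]
  refine setLIntegral_congr_fun measurableSet_Ioo fun w hw => ?_
  simp only [hnorm, mul_div_mul_left _ _ hρ.ne', haversine_cotOfHaversine hw]
  rw [sqrt_cotOfHaversine_sq_add_one hw, mul_neg, abs_neg, abs_of_nonneg (by positivity)]
  rfl

end Haversine

section BallWeight

variable {d : ℕ}

/-- The radial weight `r⁻¹` on the open unit ball, extended by zero. Any integrable radial weight
would determine the law of the direction of `v`; at a fixed haversine the factor `r⁻¹` cancels the
Jacobian of `lintegral_haversine_line`, which is linear in the distance `ρ` to the axis, so that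
only the volume of a ball remains to be computed. -/
noncomputable def ballWeight : ℝ → ℝ≥0∞ :=
  (Iio 1).indicator fun r => ENNReal.ofReal r⁻¹

@[fun_prop]
theorem measurable_ballWeight : Measurable ballWeight :=
  Measurable.indicator (by fun_prop) measurableSet_Iio

theorem lintegral_pow_mul_ballWeight (hd : 1 ≤ d) :
    ∫⁻ r in Ioi (0 : ℝ), ENNReal.ofReal (r ^ d) * ballWeight r = ENNReal.ofReal (1 / d) := by
  have hint : IntegrableOn (fun r : ℝ => r ^ (d - 1)) (Ioo 0 1) :=
    ((intervalIntegrable_iff_integrableOn_Ioo_of_le zero_le_one).1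
      (intervalIntegral.intervalIntegrable_pow (d - 1)))
  calc ∫⁻ r in Ioi (0 : ℝ), ENNReal.ofReal (r ^ d) * ballWeight r
    _ = ∫⁻ r in Ioi (0 : ℝ), (Iio 1).indicator (fun r => ENNReal.ofReal (r ^ (d - 1))) r := by
      refine setLIntegral_congr_fun measurableSet_Ioi fun r (hr : 0 < r) => ?_
      simp only [ballWeight, indicator_apply, mul_ite, mul_zero]
      rw [← ENNReal.ofReal_mul (by positivity), pow_sub₀ r hr.ne' hd, pow_one]
    _ = ∫⁻ r in Ioo (0 : ℝ) 1, ENNReal.ofReal (r ^ (d - 1)) := by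
      rw [setLIntegral_indicator measurableSet_Iio, Iio_inter_Ioi]
    _ = ENNReal.ofReal (1 / d) := by
      rw [← ofReal_integral_eq_lintegral_ofReal hint
          (ae_restrict_of_forall_mem measurableSet_Ioo fun r hr => pow_nonneg hr.1.le _),
        ← integral_Ioc_eq_integral_Ioo, ← intervalIntegral.integral_of_le zero_le_one, integral_pow]
      simp [Nat.sub_add_cancel hd, zero_pow (Nat.ne_of_gt hd), Nat.cast_sub hd]

theorem lintegral_norm_mul_ballWeight (hd : 1 ≤ d) {κ : ℝ} (hκ : 0 < κ) :
    ∫⁻ u : EuclideanSpace ℝ (Fin d),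
        ENNReal.ofReal (‖u‖ / (4 * κ ^ 3)) * ballWeight (‖u‖ / (2 * κ)) =
      volume (ball (0 : EuclideanSpace ℝ (Fin d)) 1) *
        ENNReal.ofReal ((2 * κ) ^ d / (2 * κ ^ 2)) := by
  have : Nonempty (Fin d) := ⟨⟨0, hd⟩⟩
  calc ∫⁻ u : EuclideanSpace ℝ (Fin d),
        ENNReal.ofReal (‖u‖ / (4 * κ ^ 3)) * ballWeight (‖u‖ / (2 * κ))
    _ = ∫⁻ u : EuclideanSpace ℝ (Fin d),
          (ball 0 (2 * κ)).indicator (fun _ => ENNReal.ofReal (1 / (2 * κ ^ 2))) u := by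
      refine lintegral_congr_ae ?_
      filter_upwards [compl_mem_ae_iff.2 (measure_singleton (0 : EuclideanSpace ℝ (Fin d)))]
        with u hu
      have hu' : 0 < ‖u‖ := norm_pos_iff.2 hu
      simp only [ballWeight, indicator, mem_Iio, div_lt_one (show 0 < 2 * κ by positivity),
        mem_ball_zero_iff, mul_ite, mul_zero]
      rw [← ENNReal.ofReal_mul (by positivity)]
      congr 2
      field_simp
      norm_num
    _ = _ := by
      rw [lintegral_indicator_const measurableSet_ball, Measure.addHaar_ball _ _ (by positivity),
        finrank_euclideanSpace_fin, ← mul_assoc, ← ENNReal.ofReal_mul (by positivity), mul_comm,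
        one_div_mul_eq_div]

theorem lintegral_ball_slice (hd : 1 ≤ d) {f : ℝ → ℝ≥0∞} (hf : Measurable f) :
    ∫⁻ u : EuclideanSpace ℝ (Fin d), ∫⁻ t : ℝ,
        ballWeight √(t ^ 2 + ‖u‖ ^ 2) * f ((1 - t / √(t ^ 2 + ‖u‖ ^ 2)) / 2) =
      volume (ball (0 : EuclideanSpace ℝ (Fin d)) 1) *
        ∫⁻ w in Ioo (0 : ℝ) 1,
          ENNReal.ofReal ((2 * √(w * (1 - w))) ^ d / (2 * √(w * (1 - w)) ^ 2)) * f w := by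
  have : Nonempty (Fin d) := ⟨⟨0, hd⟩⟩
  let k (w ρ : ℝ) : ℝ≥0∞ :=
    ENNReal.ofReal (ρ / (4 * √(w * (1 - w)) ^ 3)) * ballWeight (ρ / (2 * √(w * (1 - w))))
  calc ∫⁻ u : EuclideanSpace ℝ (Fin d), ∫⁻ t : ℝ,
        ballWeight √(t ^ 2 + ‖u‖ ^ 2) * f ((1 - t / √(t ^ 2 + ‖u‖ ^ 2)) / 2)
    _ = ∫⁻ u : EuclideanSpace ℝ (Fin d), ∫⁻ w in Ioo (0 : ℝ) 1, k w ‖u‖ * f w := by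
      refine lintegral_congr_ae ?_
      filter_upwards [compl_mem_ae_iff.2 (measure_singleton (0 : EuclideanSpace ℝ (Fin d)))]
        with u hu
      rw [lintegral_haversine_line (norm_pos_iff.2 hu) fun w r => ballWeight r * f w]
      simp only [k, mul_assoc]
    _ = ∫⁻ w in Ioo (0 : ℝ) 1, ∫⁻ u : EuclideanSpace ℝ (Fin d), k w ‖u‖ * f w :=
      lintegral_lintegral_swap (by unfold Function.uncurry; fun_prop)
    _ = ∫⁻ w in Ioo (0 : ℝ) 1, volume (ball (0 : EuclideanSpace ℝ (Fin d)) 1) *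
          (ENNReal.ofReal ((2 * √(w * (1 - w))) ^ d / (2 * √(w * (1 - w)) ^ 2)) * f w) := by
      refine setLIntegral_congr_fun measurableSet_Ioo fun w hw => ?_
      rw [lintegral_mul_const _ (by fun_prop), lintegral_norm_mul_ballWeight hd
        (sqrt_pos.2 (mul_pos hw.1 (sub_pos.2 hw.2))), mul_assoc]
    _ = _ := lintegral_const_mul _ (by fun_prop)

end BallWeight

section BetaDistribution

theorem lintegral_betaMeasure (α β : ℝ) {f : ℝ → ℝ≥0∞} (hf : Measurable f) :
    ∫⁻ w, f w ∂betaMeasure α β = ∫⁻ w in Ioo (0 : ℝ) 1, betaPDF α β w * f w := by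
  have hpdf : Measurable (betaPDF α β) := by unfold betaPDF; fun_prop
  have hsupport : Function.support (betaPDF α β * f) ⊆ Ioo 0 1 :=
    Function.support_subset_iff'.2 fun w hw => by
      rw [Pi.mul_apply, betaPDF_eq, if_neg (show ¬(0 < w ∧ w < 1) from hw), ENNReal.ofReal_zero,
        zero_mul]
  rw [betaMeasure, lintegral_withDensity_eq_lintegral_mul _ hpdf hf,
    ← setLIntegral_eq_of_support_subset hsupport]
  rfl

theorem betaPDFReal_nonneg {α β : ℝ} (hα : 0 < α) (hβ : 0 < β) (w : ℝ) :
    0 ≤ betaPDFReal α β w := by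
  by_cases hw : 0 < w ∧ w < 1
  · exact (betaPDFReal_pos hw.1 hw.2 hα hβ).le
  · rw [betaPDFReal, if_neg hw]

theorem integral_rpow_betaMeasure {α β a : ℝ} (hα : 0 < α) (hβ : 0 < β) (ha : 0 < α + a) :
    ∫ w, w ^ a ∂betaMeasure α β = beta (α + a) β / beta α β := by
  have hpdf (w : ℝ) : betaPDFReal α β w * w ^ a =
      beta (α + a) β / beta α β * betaPDFReal (α + a) β w := by
    have := (beta_pos ha hβ).ne'
    by_cases hw : 0 < w ∧ w < 1
    · simp only [betaPDFReal, if_pos hw]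
      rw [show α + a - 1 = α - 1 + a by ring, rpow_add hw.1]
      field_simp
    · simp [betaPDFReal, hw]
  rw [betaMeasure, integral_withDensity_eq_integral_toReal_smul (by unfold betaPDF; fun_prop)
    (by simp [betaPDF])]
  simp only [betaPDF, ENNReal.toReal_ofReal (betaPDFReal_nonneg hα hβ _), smul_eq_mul, hpdf,
    integral_const_mul]
  rw [integral_eq_lintegral_of_nonneg_ae (.of_forall (betaPDFReal_nonneg ha hβ)) (by fun_prop)]
  have := lintegral_betaPDF_eq_one ha hβ
  simp only [betaPDF] at this
  rw [this, ENNReal.toReal_one, mul_one]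

theorem two_rpow_neg_mul_beta_div_beta {d : ℝ} (hd : 0 < d) (s : ℝ) :
    2 ^ (-s) * (beta (d / 2 + -s / 2) (d / 2) / beta (d / 2) (d / 2)) =
      2 ^ (d - s - 1) * Gamma ((d + 1) / 2) * Gamma ((d - s) / 2) / (√π * Gamma (d - s / 2)) := by
  have hdup := Gamma_mul_Gamma_add_half (d / 2)
  rw [show 2 * (d / 2) = d by ring, show d / 2 + 1 / 2 = (d + 1) / 2 by ring] at hdup
  have hΓ : Gamma ((d + 1) / 2) = Gamma d * 2 ^ (1 - d) * √π / Gamma (d / 2) := by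
    rw [← hdup, mul_div_cancel_left₀ _ (Gamma_pos_of_pos (half_pos hd)).ne']
  have h2 : (2 : ℝ) ^ (-s) = 2 ^ (d - s - 1) * 2 ^ (1 - d) := by
    rw [← rpow_add two_pos]
    ring_nf
  have := Gamma_pos_of_pos hd
  have := Gamma_pos_of_pos (half_pos hd)
  rw [hΓ, h2, beta, beta, add_halves, show d / 2 + -s / 2 = (d - s) / 2 by ring,
    show (d - s) / 2 + d / 2 = d - s / 2 by ring]
  field_simp

theorem ofReal_haversine_density_eq {d : ℕ} (hd : 1 ≤ d) {w : ℝ} (hw : w ∈ Ioo (0 : ℝ) 1) :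
    ENNReal.ofReal ((2 * √(w * (1 - w))) ^ d / (2 * √(w * (1 - w)) ^ 2)) =
      ENNReal.ofReal (2 ^ d / 2 * beta (d / 2) (d / 2)) * betaPDF (d / 2) (d / 2) w := by
  have hw₀ : 0 < w := hw.1
  have hw₁ : 0 < 1 - w := sub_pos.2 hw.2
  have hβ : 0 < beta ((d : ℝ) / 2) (d / 2) := beta_pos (by positivity) (by positivity)
  have hpow : √(w * (1 - w)) ^ d = w ^ ((d : ℝ) / 2) * (1 - w) ^ ((d : ℝ) / 2) := by
    rw [← mul_rpow hw₀.le hw₁.le, rpow_div_two_eq_sqrt _ (by positivity), rpow_natCast]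
  rw [betaPDF_of_pos_lt_one hw.1 hw.2, ← ENNReal.ofReal_mul (by positivity), mul_pow, hpow,
    sq_sqrt (by positivity), rpow_sub_one hw₀.ne', rpow_sub_one hw₁.ne']
  congr 1
  field_simp

theorem lintegral_haversine_density_mul {d : ℕ} (hd : 1 ≤ d) {f : ℝ → ℝ≥0∞} (hf : Measurable f) :
    ∫⁻ w in Ioo (0 : ℝ) 1,
        ENNReal.ofReal ((2 * √(w * (1 - w))) ^ d / (2 * √(w * (1 - w)) ^ 2)) * f w =
      ENNReal.ofReal (2 ^ d / 2 * beta (d / 2) (d / 2)) *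
        ∫⁻ w, f w ∂betaMeasure (d / 2) (d / 2) := by
  rw [lintegral_betaMeasure _ _ hf, ← lintegral_const_mul' _ _ ENNReal.ofReal_ne_top]
  refine setLIntegral_congr_fun measurableSet_Ioo fun w hw => ?_
  rw [ofReal_haversine_density_eq hd hw, mul_assoc]

end BetaDistribution

theorem norm_sub_rpow_of_norm_eq_one {E : Type*} [NormedAddCommGroup E] [InnerProductSpace ℝ E]
    {x y : E} (hx : ‖x‖ = 1) (hy : ‖y‖ = 1) (p : ℝ) :
    ‖x - y‖ ^ p = 2 ^ p * ((1 - ⟪x, y⟫) / 2) ^ (p / 2) := by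
  have hinner : 0 ≤ (1 - ⟪x, y⟫) / 2 := by
    have := real_inner_le_norm x y
    rw [hx, hy] at this
    linarith
  have hnorm : ‖x - y‖ = 2 * √((1 - ⟪x, y⟫) / 2) := by
    rw [← sq_eq_sq₀ (norm_nonneg _) (by positivity), norm_sub_sq_real, mul_pow, sq_sqrt hinner,
      hx, hy]
    ring
  rw [hnorm, mul_rpow two_pos.le (sqrt_nonneg _), rpow_div_two_eq_sqrt _ hinner]

section SphereLaw

variable {E : Type*} [NormedAddCommGroup E] [InnerProductSpace ℝ E] [FiniteDimensional ℝ E]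
  [MeasurableSpace E] [BorelSpace E] {d : ℕ}

theorem lintegral_toSphere_haversine (hE : finrank ℝ E = d + 1) (hd : 1 ≤ d) {e : E}
    (he : ‖e‖ = 1) {f : ℝ → ℝ≥0∞} (hf : Measurable f) :
    ENNReal.ofReal (1 / d) * ∫⁻ y : sphere (0 : E) 1, f ((1 - ⟪e, y⟫) / 2) ∂volume.toSphere =
      volume (ball (0 : EuclideanSpace ℝ (Fin d)) 1) *
        ∫⁻ w in Ioo (0 : ℝ) 1,
          ENNReal.ofReal ((2 * √(w * (1 - w))) ^ d / (2 * √(w * (1 - w)) ^ 2)) * f w := by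
  have : Nontrivial E := nontrivial_of_finrank_pos (R := ℝ) (by lia)
  have hpolar := lintegral_norm_mul_direction (volume : Measure E) measurable_ballWeight
    (g := fun v => f ((1 - ⟪e, v⟫) / 2)) (by fun_prop)
  simp only [hE, Nat.add_sub_cancel, lintegral_pow_mul_ballWeight hd, real_inner_smul_right,
    ← div_eq_inv_mul] at hpolar
  rw [mul_comm, ← hpolar, ← lintegral_ball_slice hd hf]
  exact lintegral_inner_norm hE he (F := fun t r => ballWeight r * f ((1 - t / r) / 2))
    (by unfold Function.uncurry; fun_prop)

theorem map_haversine_toSphere (hE : finrank ℝ E = d + 1) (hd : 1 ≤ d) {e : E} (he : ‖e‖ = 1) :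
    volume.toSphere.map (fun y : sphere (0 : E) 1 => (1 - ⟪e, y⟫) / 2) =
      (volume : Measure E).toSphere univ • betaMeasure (d / 2) (d / 2) := by
  have hd' : (0 : ℝ) < d / 2 := by positivity
  have := isProbabilityMeasureBeta hd' hd'
  obtain ⟨c, hc⟩ : ∃ c : ℝ≥0∞, volume.toSphere.map
      (fun y : sphere (0 : E) 1 => (1 - ⟪e, y⟫) / 2) = c • betaMeasure (d / 2) (d / 2) := by
    have hd₀ : ENNReal.ofReal (1 / d) ≠ 0 := by simpa using Nat.ne_of_gt hd
    refine ⟨(ENNReal.ofReal (1 / d))⁻¹ * (volume (ball (0 : EuclideanSpace ℝ (Fin d)) 1) *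
      ENNReal.ofReal (2 ^ d / 2 * beta (d / 2) (d / 2))), Measure.ext_of_lintegral _ fun f hf => ?_⟩
    rw [lintegral_map hf (by fun_prop), lintegral_smul_measure, smul_eq_mul, mul_assoc, mul_assoc,
      ← lintegral_haversine_density_mul hd hf, ← lintegral_toSphere_haversine hE hd he hf,
      ENNReal.inv_mul_cancel_left hd₀ ENNReal.ofReal_ne_top]
  have huniv := congrArg (· univ) hc
  simp only [Measure.map_apply (by fun_prop : Measurable fun y : sphere (0 : E) 1 =>
    (1 - ⟪e, (y : E)⟫) / 2) .univ, preimage_univ, Measure.smul_apply, measure_univ, smul_eq_mul,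
    mul_one] at huniv
  rw [hc, huniv]

theorem average_norm_sub_rpow_neg_toSphere (hE : finrank ℝ E = d + 1) (hd : 1 ≤ d) {s : ℝ}
    (hs : s < d) {x : E} (hx : ‖x‖ = 1) :
    ⨍ y : sphere (0 : E) 1, ‖x - y‖ ^ (-s) ∂volume.toSphere =
      2 ^ ((d : ℝ) - s - 1) * Gamma (((d : ℝ) + 1) / 2) * Gamma (((d : ℝ) - s) / 2) /
        (√π * Gamma ((d : ℝ) - s / 2)) := by
  have : Nontrivial E := nontrivial_of_finrank_pos (R := ℝ) (by lia)
  have hd' : (0 : ℝ) < d := by positivity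
  have hmass : (volume : Measure E).toSphere.real univ ≠ 0 :=
    (measureReal_ne_zero_iff (measure_ne_top _ _)).2
      (Measure.measure_univ_ne_zero.2 (Measure.toSphere_ne_zero _))
  calc ⨍ y : sphere (0 : E) 1, ‖x - y‖ ^ (-s) ∂volume.toSphere
    _ = ⨍ y : sphere (0 : E) 1, 2 ^ (-s) * ((1 - ⟪x, y⟫) / 2) ^ (-s / 2) ∂volume.toSphere := by
      simp only [norm_sub_rpow_of_norm_eq_one hx (norm_eq_of_mem_sphere _)]
    _ = ((volume : Measure E).toSphere.real univ)⁻¹ * (2 ^ (-s) *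
          ∫ w, w ^ (-s / 2) ∂volume.toSphere.map fun y : sphere (0 : E) 1 => (1 - ⟪x, y⟫) / 2) := by
      rw [average_eq, integral_const_mul, smul_eq_mul, integral_map (by fun_prop) (by fun_prop)]
    _ = 2 ^ (-s) * ∫ w, w ^ (-s / 2) ∂betaMeasure (d / 2) (d / 2) := by
      rw [map_haversine_toSphere hE hd hx, integral_smul_measure, ← measureReal_def, smul_eq_mul]
      field_simp
    _ = _ := by
      rw [integral_rpow_betaMeasure (half_pos hd') (half_pos hd') (by linarith),
        two_rpow_neg_mul_beta_div_beta hd']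

theorem continuous_s_energy_sphere_general (hE : finrank ℝ E = d + 1) (hd : 1 ≤ d) {s : ℝ}
    (hs : s < d) :
    ⨍ x : sphere (0 : E) 1, ⨍ y : sphere (0 : E) 1, ‖(x : E) - y‖ ^ (-s)
        ∂volume.toSphere ∂volume.toSphere =
      2 ^ ((d : ℝ) - s - 1) * Gamma (((d : ℝ) + 1) / 2) * Gamma (((d : ℝ) - s) / 2) /
        (√π * Gamma ((d : ℝ) - s / 2)) := by
  have : Nontrivial E := nontrivial_of_finrank_pos (R := ℝ) (by lia)
  have : NeZero (volume : Measure E).toSphere := ⟨Measure.toSphere_ne_zero _⟩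
  simp only [average_norm_sub_rpow_neg_toSphere hE hd hs (norm_eq_of_mem_sphere _), average_const]

end SphereLaw

theorem continuous_s_energy_sphere (d : ℕ) (hd : 1 ≤ d) (s : ℝ) (hs : s < d) :
    ∫ x, ∫ y, ‖(x : EuclideanSpace ℝ (Fin (d + 1))) - (y : EuclideanSpace ℝ (Fin (d + 1)))‖ ^ (-s)
      ∂(uniformSphere d) ∂(uniformSphere d) =
      2 ^ ((d : ℝ) - s - 1) * Real.Gamma (((d : ℝ) + 1) / 2) * Real.Gamma (((d : ℝ) - s) / 2) /
        (Real.sqrt Real.pi * Real.Gamma ((d : ℝ) - s / 2)) :=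
  continuous_s_energy_sphere_general finrank_euclideanSpace_fin hd hs
end
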